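/- arXiv:1604.08558 — 5 statements merged into one kernel-verified Lean document; each statement's English description precedes it below -/
import Mathlib

section
/- Let R and S be equivalence relations on List Bool. If R is kernel dense and S is kernel sparse, then there is no polynomially length-bounded kernel reduction from R to S; that is, there is no function f : List Bool → List Bool together with a polynomial p : Polynomial ℕ such that (f x).length ≤ p.eval x.length for all x and, for all x y, R x y ↔ S (f x) (f y). -/
/-- `numClasses R n` is `#R(n)`: the number of equivalence classes of `R`
containing some string of length at most `n`. -/
noncomputable def numClasses (R : Setoid (List Bool)) (n : ℕ) : ℕ :=
  (Quotient.mk R '' {w : List Bool | w.length ≤ n}).ncard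

/-- `R` is kernel sparse if `#R(n)` is polynomially bounded. -/
def KernelSparse (R : Setoid (List Bool)) : Prop :=
  ∃ q : Polynomial ℕ, ∀ n : ℕ, numClasses R n ≤ q.eval n

/-- `R` is kernel dense if `#R(n)` exceeds every polynomial for some `n`. -/
def KernelDense (R : Setoid (List Bool)) : Prop :=
  ∀ p : Polynomial ℕ, ∃ n : ℕ, numClasses R n > p.eval n

/-- There is no polynomially length-bounded kernel reduction from a
kernel dense equivalence relation to a kernel sparse one. -/
theorem no_kernel_reduction_dense_to_sparse
    (R S : Setoid (List Bool)) (hR : KernelDense R) (hS : KernelSparse S) :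
    ¬ ∃ (f : List Bool → List Bool) (p : Polynomial ℕ),
        (∀ x : List Bool, (f x).length ≤ p.eval x.length) ∧
        (∀ x y : List Bool, R.r x y ↔ S.r (f x) (f y)) := by
  rintro ⟨f, p, hlen, hf⟩
  obtain ⟨q, hq⟩ := hS
  obtain ⟨n, hn⟩ := hR (q.comp p)
  have hmono : ∀ a b : ℕ, a ≤ b → p.eval a ≤ p.eval b := by
    intro a b hab
    rw [Polynomial.eval_eq_sum_range, Polynomial.eval_eq_sum_range]
    exact Finset.sum_le_sum fun i _ => Nat.mul_le_mul_left _ (Nat.pow_le_pow_left hab i)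
  have hfin : {w : List Bool | w.length ≤ p.eval n}.Finite := List.finite_length_le Bool _
  have key : numClasses R n ≤ numClasses S (p.eval n) := by
    unfold numClasses
    refine Set.ncard_le_ncard_of_injOn
      (Quotient.map f (fun x y h => (hf x y).1 h)) ?_ ?_ (hfin.image _)
    · rintro _ ⟨w, hw, rfl⟩
      exact ⟨f w, (hlen w).trans (hmono _ _ hw), rfl⟩
    · rintro _ ⟨x, _, rfl⟩ _ ⟨y, _, rfl⟩ h
      exact Quotient.sound ((hf x y).2 (Quotient.exact h))
  have h2 := hq (p.eval n)
  rw [Polynomial.eval_comp] at hn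
  omega
end

section
/- The equality relation on List Bool is kernel dense, and consequently, for every kernel sparse equivalence relation S on List Bool there is no polynomially length-bounded kernel reduction from the equality relation to S; that is, there is no function f : List Bool → List Bool with a polynomial p : Polynomial ℕ satisfying (f x).length ≤ p.eval x.length for all x and, for all x y : List Bool, x = y ↔ S (f x) (f y). -/
/-- The equality relation on binary strings, as a setoid. -/
def eqSetoid : Setoid (List Bool) := ⟨Eq, eq_equivalence⟩

theorem poly_isLittleO (p : Polynomial ℕ) :
    (fun n : ℕ => ((p.eval n : ℕ) : ℝ)) =o[Filter.atTop] (fun n : ℕ => (2 : ℝ) ^ n) := by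
  induction p using Polynomial.induction_on' with
  | add p q hp hq =>
    simpa using hp.add hq
  | monomial k a =>
    have h := (isLittleO_pow_const_const_pow_of_one_lt (R := ℝ) k
      (r := (2 : ℝ)) one_lt_two).const_mul_left (a : ℝ)
    simpa using h

theorem exists_poly_lt (p : Polynomial ℕ) : ∃ n : ℕ, p.eval n < 2 ^ n := by
  have h := (poly_isLittleO p).bound (c := 1 / 2) (by norm_num)
  obtain ⟨n, hn⟩ := h.exists
  refine ⟨n, ?_⟩
  have h2 : (0 : ℝ) < 2 ^ n := by positivity
  rw [Real.norm_of_nonneg (by positivity), Real.norm_of_nonneg h2.le] at hn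
  have : ((p.eval n : ℕ) : ℝ) < 2 ^ n := by linarith
  exact_mod_cast this

theorem pow_le_numClasses (S : Setoid (List Bool)) (f : List Bool → List Bool) (n m : ℕ)
    (hm : ∀ x : List Bool, x.length = n → (f x).length ≤ m)
    (hf : ∀ x y : List Bool, S.r (f x) (f y) → x = y) : 2 ^ n ≤ numClasses S m := by
  have hfin : (Quotient.mk S '' {w : List Bool | w.length ≤ m}).Finite :=
    (List.finite_length_le Bool m).image _
  have hinj : Function.Injective
      (fun v : List.Vector Bool n => Quotient.mk S (f v.1)) := by
    intro v w h
    exact Subtype.ext (hf _ _ (Quotient.exact h))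
  have hcard : (Set.range (fun v : List.Vector Bool n => Quotient.mk S (f v.1))).ncard
      = 2 ^ n := by
    rw [← Set.image_univ, Set.ncard_image_of_injective _ hinj, Set.ncard_univ,
      Nat.card_eq_fintype_card, card_vector, Fintype.card_bool]
  rw [← hcard]
  refine Set.ncard_le_ncard ?_ hfin
  rintro _ ⟨v, rfl⟩
  exact ⟨f v.1, hm _ v.2, rfl⟩

/-- The equality relation is kernel dense, and consequently there is no
polynomially length-bounded kernel reduction from equality to any kernel sparse
equivalence relation. -/
theorem equality_kernelDense_and_no_reduction_to_sparse :
    KernelDense eqSetoid ∧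
    ∀ S : Setoid (List Bool), KernelSparse S →
      ¬ ∃ (f : List Bool → List Bool) (p : Polynomial ℕ),
          (∀ x : List Bool, (f x).length ≤ p.eval x.length) ∧
          (∀ x y : List Bool, x = y ↔ S.r (f x) (f y)) := by
  constructor
  · intro p
    obtain ⟨n, hn⟩ := exists_poly_lt p
    exact ⟨n, hn.trans_le (pow_le_numClasses eqSetoid id n n (fun x hx => hx.le)
      (fun x y h => h))⟩
  · rintro S ⟨q, hq⟩ ⟨f, p, hp, hf⟩
    obtain ⟨n, hn⟩ := exists_poly_lt (q.comp p)
    rw [Polynomial.eval_comp] at hn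
    have h := pow_le_numClasses S f n (p.eval n) (fun x hx => hx ▸ hp x)
      (fun x y h => (hf x y).2 h)
    exact absurd (h.trans (hq _)) (not_le.2 hn)
end

section
/- Define equivalence relations R₀ and S₀ on List Bool by: R₀ x y iff x.length = y.length or (x.length ≤ 1 and y.length ≤ 1); and S₀ x y iff x and y lie in the same block Sₙ, where S₁ = {w | w.length ≤ 8} and, for n ≥ 2, Sₙ = {w | n^(n+1) + 1 ≤ w.length ≤ (n+1)^(n+2)}. Then there is no polynomially length-bounded kernel reduction from R₀ to S₀: for every function f : List Bool → List Bool and every polynomial p : Polynomial ℕ with (f x).length ≤ p.eval x.length for all x, it is not the case that for all x y, R₀ x y ↔ S₀ (f x) (f y). -/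
/-- The block `Sₙ` from the construction: `S₁` consists of all strings of length at
most `8 = p₂(2)`, and for `n ≥ 2`, `Sₙ` consists of the strings `w` with
`n^(n+1) + 1 ≤ w.length ≤ (n+1)^(n+2)`. -/
def SBlock (n : ℕ) : Set (List Bool) :=
  if n = 1 then {w : List Bool | w.length ≤ 8}
  else {w : List Bool | n ^ (n + 1) + 1 ≤ w.length ∧ w.length ≤ (n + 1) ^ (n + 2)}

/-- The relation `R₀`: same length, with lengths `0` and `1` merged into one class. -/
def R0 (x y : List Bool) : Prop :=
  x.length = y.length ∨ (x.length ≤ 1 ∧ y.length ≤ 1)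

/-- The relation `S₀`: `x` and `y` are related iff they lie in the same block `Sₙ`. -/
def S0 (x y : List Bool) : Prop :=
  ∃ n : ℕ, 1 ≤ n ∧ x ∈ SBlock n ∧ y ∈ SBlock n

theorem poly_eval_le (p : Polynomial ℕ) (m N : ℕ) (hm : m ≤ N) (hN : 1 ≤ N) :
    p.eval m ≤ p.eval 1 * N ^ p.natDegree := by
  rw [Polynomial.eval_eq_sum_range, Polynomial.eval_eq_sum_range, Finset.sum_mul]
  refine Finset.sum_le_sum fun i hi => ?_
  have hi' : i ≤ p.natDegree := by
    have := Finset.mem_range.mp hi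
    omega
  rw [one_pow, mul_one]
  exact Nat.mul_le_mul_left _
    ((Nat.pow_le_pow_left hm i).trans (Nat.pow_le_pow_right hN hi'))

/-- there is no polynomially length-bounded kernel reduction from
`R₀` to `S₀`. -/
theorem no_kernel_reduction_R0_to_S0 :
    ∀ (f : List Bool → List Bool) (p : Polynomial ℕ),
      (∀ x : List Bool, (f x).length ≤ p.eval x.length) →
      ¬ (∀ x y : List Bool, R0 x y ↔ S0 (f x) (f y)) := by
  intro f p hp hf
  have hex : ∀ m : ℕ, ∃ n : ℕ, 1 ≤ n ∧ f (List.replicate m true) ∈ SBlock n := by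
    intro m
    obtain ⟨n, h1, h2, _⟩ := (hf (List.replicate m true) (List.replicate m true)).1 (Or.inl rfl)
    exact ⟨n, h1, h2⟩
  choose g hg1 hg2 using hex
  obtain ⟨N, hN⟩ : ∃ N, N = p.eval 1 + p.natDegree + 2 := ⟨_, rfl⟩
  have key : ∃ m ∈ Finset.Icc 1 N, N ≤ g m := by
    by_contra! hlt
    obtain ⟨a, ha, b, hb, hab, hgab⟩ :=
      Finset.exists_ne_map_eq_of_card_lt_of_maps_to (s := Finset.Icc 1 N)
        (t := Finset.Icc 1 (N - 1)) (f := g) (by simp; omega)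
        (fun m hm => by
          have h1 := hlt m hm
          have h2 := hg1 m
          simp only [Finset.coe_Icc, Set.mem_Icc]
          omega)
    have h := (hf (List.replicate a true) (List.replicate b true)).2
      ⟨g a, hg1 a, hg2 a, hgab ▸ hg2 b⟩
    simp only [R0, List.length_replicate] at h
    simp only [Finset.mem_Icc] at ha hb
    omega
  obtain ⟨m, hm, hgm⟩ := key
  have hmN := (Finset.mem_Icc.mp hm).2
  have h1 := hg2 m
  have hne : g m ≠ 1 := by omega
  simp only [SBlock, if_neg hne, Set.mem_setOf_eq] at h1
  have h2 := hp (List.replicate m true)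
  rw [List.length_replicate] at h2
  have h3 := poly_eval_le p m N hmN (by omega)
  have h4 : p.eval 1 * N ^ p.natDegree ≤ N ^ (N + 1) := calc
    p.eval 1 * N ^ p.natDegree ≤ N * N ^ p.natDegree := Nat.mul_le_mul_right _ (by omega)
    _ = N ^ (p.natDegree + 1) := by ring
    _ ≤ N ^ (N + 1) := Nat.pow_le_pow_right (by omega) (by omega)
  have h5 : N ^ (N + 1) ≤ g m ^ (g m + 1) :=
    (Nat.pow_le_pow_left hgm _).trans (Nat.pow_le_pow_right (by omega) (by omega))
  omega
end

section
/- Define equivalence relations R₀ and S₀ on List Bool by: R₀ x y iff x.length = y.length or (x.length ≤ 1 and y.length ≤ 1); and S₀ x y iff x and y lie in the same block Sₙ, where S₁ = {w | w.length ≤ 8} and, for n ≥ 2, Sₙ = {w | n^(n+1) + 1 ≤ w.length ≤ (n+1)^(n+2)}. Then the language of R₀ many-one reduces to the language of S₀: (fun a : List Bool × List Bool => R₀ a.1 a.2) ≤₀ (fun a : List Bool × List Bool => S₀ a.1 a.2). -/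
theorem S0_nil_nil : S0 [] [] :=
  ⟨1, le_refl 1, by simp [SBlock], by simp [SBlock]⟩

theorem not_S0_nil_nine : ¬ S0 [] (List.replicate 9 true) := by
  rintro ⟨n, -, h1, h2⟩
  by_cases hn : n = 1
  · subst hn
    simp [SBlock] at h2
  · simp [SBlock, hn] at h1

instance R0_decidable : DecidablePred (fun a : List Bool × List Bool => R0 a.1 a.2) :=
  fun a => by unfold R0; infer_instance

theorem R0_primrecPred : PrimrecPred (fun a : List Bool × List Bool => R0 a.1 a.2) := by
  have l1 : Primrec (fun a : List Bool × List Bool => a.1.length) :=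
    Primrec.list_length.comp Primrec.fst
  have l2 : Primrec (fun a : List Bool × List Bool => a.2.length) :=
    Primrec.list_length.comp Primrec.snd
  exact (Primrec.eq.comp l1 l2).or
    ((Primrec.nat_le.comp l1 (Primrec.const 1)).and (Primrec.nat_le.comp l2 (Primrec.const 1)))

/-- the language of `R₀` many-one reduces to the language of `S₀`. -/
theorem R0_manyOneReducible_S0 :
    (fun a : List Bool × List Bool => R0 a.1 a.2) ≤₀
      (fun a : List Bool × List Bool => S0 a.1 a.2) := by
  refine ⟨fun a => if R0 a.1 a.2 then ([], []) else ([], List.replicate 9 true),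
    (Primrec.ite R0_primrecPred (Primrec.const _) (Primrec.const _)).to_comp, fun a => ?_⟩
  by_cases h : R0 a.1 a.2
  · simp only [h, if_true, S0_nil_nil]
  · simp only [h, if_false, not_S0_nil_nine]
end

section
/- Let S₁ be the equivalence relation on List Bool relating x and y iff x.count true = y.count true (x and y have the same number of 1s). Every equivalence class of S₁ is infinite. Consequently, for any equivalence relation A on a type β all of whose equivalence classes {y | A b y} are finite, no kernel reduction f : List Bool → β from S₁ to A is injective. -/
/-- Every equivalence class of the "same number of 1s" relation on
binary strings is infinite; consequently, no kernel reduction from it to an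
equivalence relation all of whose classes are finite is injective. -/
theorem same_count_classes_infinite_and_no_injective_reduction :
    (∀ w : List Bool, {x : List Bool | x.count true = w.count true}.Infinite) ∧
    ∀ (β : Type*) (A : β → β → Prop), Equivalence A →
      (∀ b : β, {y : β | A b y}.Finite) →
      ∀ f : List Bool → β,
        (∀ x y : List Bool, x.count true = y.count true ↔ A (f x) (f y)) →
        ¬ Function.Injective f := by
  have key : ∀ w : List Bool, {x : List Bool | x.count true = w.count true}.Infinite := by
    intro w
    refine Set.infinite_of_injective_forall_mem
      (f := fun n : ℕ => List.replicate n false ++ w) ?_ ?_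
    · intro m n h
      have h2 := congrArg List.length h
      simp only [List.length_append, List.length_replicate] at h2
      omega
    · intro n
      simp [List.count_append, List.count_replicate]
  refine ⟨key, ?_⟩
  intro β A _ hfin f hf hinj
  refine key [] (((hfin (f [])).preimage hinj.injOn).subset ?_)
  intro x hx
  exact (hf [] x).1 (Eq.symm hx)
end
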